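/- Let x : [0,1] → ℝ be regular, strictly increasing, with x(1) − x(0) > 2. Define u, v, w : [0,1] → [0,1] by u(α) = 0 if x(α) ≤ x(0) + 1 and u(α) = x⁻¹(x(α) − 1) otherwise; v(α) = 1 if x(α) ≥ x(1) − 1 and v(α) = x⁻¹(x(α) + 1) otherwise; and w = v − u. Then at every α ∈ [0,1] at which u, v and Tx are differentiable, the derivative of the HK update satisfies (Tx)′(α) = (1/w(α))·[u′(α)·(1 + Tx(α) − x(α)) + v′(α)·(1 + x(α) − Tx(α))]. -/

import Mathlib

open MeasureTheory Set

/-- The neighbourhood set `N_x(α) = {β ∈ [0,1] : |x(β) − x(α)| ≤ 1}`. -/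
def hkNbhd (x : ℝ → ℝ) (α : ℝ) : Set ℝ :=
  {β | β ∈ Icc (0:ℝ) 1 ∧ |x β - x α| ≤ 1}

/-- The continuous-agent Hegselmann–Krause update
`Tx(α) = (∫_{N_x(α)} x dμ) / μ(N_x(α))`. -/
noncomputable def hkT (x : ℝ → ℝ) : ℝ → ℝ :=
  fun α => (∫ β in hkNbhd x α, x β) / (volume (hkNbhd x α)).toReal

/-- A function `x : [0,1] → ℝ` is regular if it is continuous, nondecreasing,
differentiable outside a set of measure zero, and there are constants
`0 < m ≤ M` with `m ≤ x′ ≤ M` wherever the derivative exists. -/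
def Regular (x : ℝ → ℝ) : Prop :=
  ContinuousOn x (Icc 0 1) ∧ MonotoneOn x (Icc 0 1) ∧
  ∃ m M : ℝ, 0 < m ∧ m ≤ M ∧
    (∀ᵐ α ∂(volume.restrict (Icc (0:ℝ) 1)), DifferentiableAt ℝ x α) ∧
    ∀ α ∈ Icc (0:ℝ) 1, DifferentiableAt ℝ x α → m ≤ deriv x α ∧ deriv x α ≤ M

open scoped Topology

/-!
For strictly increasing `x`, the neighbourhood of `α` is the interval `[u α, v α]`, so `Tx` is the
mean of `x` over a moving interval. By the fundamental theorem of calculus this mean `A` has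
derivative `w⁻¹ (v' (x(v) - A) - u' (x(u) - A))`. Each endpoint either satisfies `x(u) = x - 1`,
respectively `x(v) = x + 1`, or is pinned to the boundary throughout a neighbourhood of `α` and so
has zero velocity; in either case `u' x(u) = u' (x - 1)` and `v' x(v) = v' (x + 1)`.
-/

section MovingInterval

variable {E : Type*} [NormedAddCommGroup E] [NormedSpace ℝ E] [CompleteSpace E]
  {f : ℝ → E} {u v : ℝ → ℝ} {a b t u' v' : ℝ} {s : Set ℝ}

theorem hasDerivWithinAt_integral_of_continuousOn_Icc (hf : ContinuousOn f (Icc a b))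
    (hu : HasDerivWithinAt u u' s t) (hv : HasDerivWithinAt v v' s t)
    (hus : MapsTo u s (Icc a b)) (hvs : MapsTo v s (Icc a b)) (ht : t ∈ s) :
    HasDerivWithinAt (fun τ ↦ ∫ β in u τ..v τ, f β) (v' • f (v t) - u' • f (u t)) s t := by
  have hut : Fact (u t ∈ Icc a b) := ⟨hus ht⟩
  have hvt : Fact (v t ∈ Icc a b) := ⟨hvs ht⟩
  have hint : IntervalIntegrable f volume (u t) (v t) :=
    (hf.mono (uIcc_subset_Icc hut.out hvt.out)).intervalIntegrable
  have hmeas := hf.stronglyMeasurableAtFilter_nhdsWithin (μ := volume) measurableSet_Icc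
  have hmaps : MapsTo (fun τ ↦ (u τ, v τ)) s (Icc a b ×ˢ Icc a b) := fun τ hτ ↦ ⟨hus hτ, hvs hτ⟩
  have hFTC := intervalIntegral.integral_hasFDerivWithinAt hint (hmeas (u t)) (hmeas (v t))
    (s := Icc a b) (t := Icc a b) (hf _ hut.out) (hf _ hvt.out)
  simpa using! hFTC.comp_hasDerivWithinAt t (hu.prodMk hv) hmaps

theorem hasDerivWithinAt_intervalAverage (hf : ContinuousOn f (Icc a b))
    (hu : HasDerivWithinAt u u' s t) (hv : HasDerivWithinAt v v' s t)
    (hus : MapsTo u s (Icc a b)) (hvs : MapsTo v s (Icc a b)) (ht : t ∈ s) (hne : u t ≠ v t) :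
    HasDerivWithinAt (fun τ ↦ ⨍ β in u τ..v τ, f β)
      ((v t - u t)⁻¹ • (v' • (f (v t) - ⨍ β in u t..v t, f β) -
        u' • (f (u t) - ⨍ β in u t..v t, f β))) s t := by
  have hw : v t - u t ≠ 0 := sub_ne_zero.2 hne.symm
  simp only [interval_average_eq]
  convert ((hv.fun_sub hu).fun_inv hw).fun_smul
    (hasDerivWithinAt_integral_of_continuousOn_Icc hf hu hv hus hvs ht) using 1
  match_scalars <;> field

end MovingInterval

/-- `u` is the left endpoint function of the windows `{s ∈ [a, b] | |x s - x t| ≤ r}`: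
`u t = x⁻¹ (x t - r)`, truncated to `a` where `x t - r` does not exceed `x a`. The inverse is
encoded by the equation `x (u t) = x t - r`, and `u` is unconstrained outside `[a, b]`. -/
structure IsWindowLeft {ι : Type*} [Preorder ι] (x : ι → ℝ) (a b : ι) (r : ℝ) (u : ι → ι) :
    Prop where
  mapsTo : MapsTo u (Icc a b) (Icc a b)
  eq_left : ∀ t ∈ Icc a b, x t ≤ x a + r → u t = a
  apply_eq : ∀ t ∈ Icc a b, x a + r < x t → x (u t) = x t - r

/-- `v` is the right endpoint function of the windows `{s ∈ [a, b] | |x s - x t| ≤ r}`: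
`v t = x⁻¹ (x t + r)`, truncated to `b` where `x t + r` is at least `x b`; the encoding is that of
`IsWindowLeft`. -/
structure IsWindowRight {ι : Type*} [Preorder ι] (x : ι → ℝ) (a b : ι) (r : ℝ) (v : ι → ι) :
    Prop where
  mapsTo : MapsTo v (Icc a b) (Icc a b)
  eq_right : ∀ t ∈ Icc a b, x b - r ≤ x t → v t = b
  apply_eq : ∀ t ∈ Icc a b, x t < x b - r → x (v t) = x t + r

section Order

variable {ι : Type*} [LinearOrder ι] {x : ι → ℝ} {a b s t : ι} {r : ℝ} {u v : ι → ι}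

theorem IsWindowLeft.le_iff (hu : IsWindowLeft x a b r u) (hx : StrictMonoOn x (Icc a b))
    (ht : t ∈ Icc a b) (hs : s ∈ Icc a b) : u t ≤ s ↔ x t - r ≤ x s := by
  rcases le_or_gt (x t) (x a + r) with h | h
  · have has : x a ≤ x s := hx.monotoneOn (left_mem_Icc.2 (hs.1.trans hs.2)) hs hs.1
    rw [hu.eq_left t ht h]
    exact iff_of_true hs.1 (by linarith)
  · rw [← hu.apply_eq t ht h, hx.le_iff_le (hu.mapsTo ht) hs]

theorem IsWindowRight.le_iff (hv : IsWindowRight x a b r v) (hx : StrictMonoOn x (Icc a b))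
    (ht : t ∈ Icc a b) (hs : s ∈ Icc a b) : s ≤ v t ↔ x s ≤ x t + r := by
  rcases le_or_gt (x b - r) (x t) with h | h
  · have hsb : x s ≤ x b := hx.monotoneOn hs (right_mem_Icc.2 (hs.1.trans hs.2)) hs.2
    rw [hv.eq_right t ht h]
    exact iff_of_true hs.2 (by linarith)
  · rw [← hv.apply_eq t ht h, hx.le_iff_le hs (hv.mapsTo ht)]

theorem IsWindowLeft.lt_self (hu : IsWindowLeft x a b r u) (hx : StrictMonoOn x (Icc a b))
    (hr : 0 < r) (ht : t ∈ Ioc a b) : u t < t := by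
  have ht' := Ioc_subset_Icc_self ht
  rcases le_or_gt (x t) (x a + r) with h | h
  · exact (hu.eq_left t ht' h).trans_lt ht.1
  · rw [← hx.lt_iff_lt (hu.mapsTo ht') ht', hu.apply_eq t ht' h]
    exact sub_lt_self _ hr

theorem IsWindowRight.self_lt (hv : IsWindowRight x a b r v) (hx : StrictMonoOn x (Icc a b))
    (hr : 0 < r) (ht : t ∈ Ico a b) : t < v t := by
  have ht' := Ico_subset_Icc_self ht
  rcases le_or_gt (x b - r) (x t) with h | h
  · exact ht.2.trans_eq (hv.eq_right t ht' h).symm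
  · rw [← hx.lt_iff_lt ht' (hv.mapsTo ht'), hv.apply_eq t ht' h]
    exact lt_add_of_pos_right _ hr

theorem IsWindowLeft.lt_right (hu : IsWindowLeft x a b r u) (hv : IsWindowRight x a b r v)
    (hx : StrictMonoOn x (Icc a b)) (hr : 0 < r) (hab : a < b) (ht : t ∈ Icc a b) :
    u t < v t := by
  rcases ht.1.eq_or_lt with rfl | hat
  · exact ((hu.le_iff hx ht ht).2 (by linarith)).trans_lt (hv.self_lt hx hr ⟨le_rfl, hab⟩)
  · exact (hu.lt_self hx hr ⟨hat, ht.2⟩).trans_le ((hv.le_iff hx ht ht).2 (by linarith))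

theorem IsWindowLeft.setOf_abs_sub_le_eq_Icc (hu : IsWindowLeft x a b r u)
    (hv : IsWindowRight x a b r v) (hx : StrictMonoOn x (Icc a b)) (ht : t ∈ Icc a b) :
    {s | s ∈ Icc a b ∧ |x s - x t| ≤ r} = Icc (u t) (v t) := by
  have hsub : Icc (u t) (v t) ⊆ Icc a b := Icc_subset_Icc (hu.mapsTo ht).1 (hv.mapsTo ht).2
  ext s
  refine ⟨fun ⟨hs, h⟩ ↦ ?_, fun h ↦ ⟨hsub h, ?_⟩⟩
  · rw [mem_Icc, hu.le_iff hx ht hs, hv.le_iff hx ht hs]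
    constructor <;> linarith [abs_le.1 h]
  · have hleft : x t - r ≤ x s := (hu.le_iff hx ht (hsub h)).1 h.1
    have hright : x s ≤ x t + r := (hv.le_iff hx ht (hsub h)).1 h.2
    exact abs_sub_le_iff.2 ⟨by linarith, by linarith⟩

end Order

section EndpointVelocity

variable {x u v : ℝ → ℝ} {a b r t u' v' : ℝ}

theorem IsWindowLeft.deriv_mul_apply (hu : IsWindowLeft x a b r u)
    (hx : ContinuousWithinAt x (Icc a b) t) (hab : a < b) (ht : t ∈ Icc a b)
    (hu' : HasDerivWithinAt u u' (Icc a b) t) : u' * x (u t) = u' * (x t - r) := by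
  rcases lt_trichotomy (x t) (x a + r) with h | h | h
  · have hconst : u =ᶠ[𝓝[Icc a b] t] fun _ ↦ a := by
      filter_upwards [hx.eventually_lt_const h, self_mem_nhdsWithin] with τ hτ hτab
      exact hu.eq_left τ hτab hτ.le
    have hzero : u' = 0 := (uniqueDiffOn_Icc hab t ht).eq_deriv _ hu'
      ((hasDerivWithinAt_const t _ a).congr_of_eventuallyEq hconst (hu.eq_left t ht h.le))
    simp [hzero]
  · rw [hu.eq_left t ht h.le, h, add_sub_cancel_right]
  · rw [hu.apply_eq t ht h]

theorem IsWindowRight.deriv_mul_apply (hv : IsWindowRight x a b r v)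
    (hx : ContinuousWithinAt x (Icc a b) t) (hab : a < b) (ht : t ∈ Icc a b)
    (hv' : HasDerivWithinAt v v' (Icc a b) t) : v' * x (v t) = v' * (x t + r) := by
  rcases lt_trichotomy (x t) (x b - r) with h | h | h
  · rw [hv.apply_eq t ht h]
  · rw [hv.eq_right t ht h.ge, h, sub_add_cancel]
  · have hconst : v =ᶠ[𝓝[Icc a b] t] fun _ ↦ b := by
      filter_upwards [hx.eventually_const_lt h, self_mem_nhdsWithin] with τ hτ hτab
      exact hv.eq_right τ hτab hτ.le
    have hzero : v' = 0 := (uniqueDiffOn_Icc hab t ht).eq_deriv _ hv'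
      ((hasDerivWithinAt_const t _ b).congr_of_eventuallyEq hconst (hv.eq_right t ht h.le))
    simp [hzero]

end EndpointVelocity

section Update

variable {x u v : ℝ → ℝ} {α u' v' : ℝ}

theorem hkT_eq_setAverage (x : ℝ → ℝ) (α : ℝ) : hkT x α = ⨍ β in hkNbhd x α, x β := by
  rw [setAverage_eq, smul_eq_mul, inv_mul_eq_div]
  rfl

theorem hkT_eq_intervalAverage (hx : StrictMonoOn x (Icc 0 1)) (hu : IsWindowLeft x 0 1 1 u)
    (hv : IsWindowRight x 0 1 1 v) (hα : α ∈ Icc 0 1) : hkT x α = ⨍ β in u α..v α, x β := by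
  have hNbhd : hkNbhd x α = Icc (u α) (v α) := hu.setOf_abs_sub_le_eq_Icc hv hx hα
  have hle : u α ≤ v α := (hu.lt_right hv hx one_pos one_pos hα).le
  rw [hkT_eq_setAverage, hNbhd, uIoc_of_le hle, setAverage_congr Ioc_ae_eq_Icc]

theorem hk_deriv_formula_general (hc : ContinuousOn x (Icc 0 1)) (hx : StrictMonoOn x (Icc 0 1))
    (hu : IsWindowLeft x 0 1 1 u) (hv : IsWindowRight x 0 1 1 v) (hα : α ∈ Icc 0 1)
    (hu' : HasDerivWithinAt u u' (Icc 0 1) α) (hv' : HasDerivWithinAt v v' (Icc 0 1) α) :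
    HasDerivWithinAt (hkT x)
      ((1 / (v α - u α)) * (u' * (1 + hkT x α - x α) + v' * (1 + x α - hkT x α)))
      (Icc 0 1) α := by
  have hmean : EqOn (hkT x) (fun τ ↦ ⨍ β in u τ..v τ, x β) (Icc 0 1) :=
    fun τ hτ ↦ hkT_eq_intervalAverage hx hu hv hτ
  have hne : u α ≠ v α := (hu.lt_right hv hx one_pos one_pos hα).ne
  have hderiv := (hasDerivWithinAt_intervalAverage hc hu' hv' hu.mapsTo hv.mapsTo hα hne).congr
    hmean (hmean hα)
  rw [← hkT_eq_intervalAverage hx hu hv hα] at hderiv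
  have hleft : u' * x (u α) = u' * (x α - 1) := hu.deriv_mul_apply (hc α hα) one_pos hα hu'
  have hright : v' * x (v α) = v' * (x α + 1) := hv.deriv_mul_apply (hc α hα) one_pos hα hv'
  refine hderiv.congr_deriv ?_
  simp only [smul_eq_mul, one_div]
  linear_combination (v α - u α)⁻¹ * (hright - hleft)

end Update

/-- Lemma 5 of the paper: the formula for the derivative of the HK update of a
regular, strictly increasing `x` with `x(1) − x(0) > 2`, in terms of the
window-endpoint functions `u` and `v` (with `w = v − u`). -/
theorem hk_deriv_formula (x : ℝ → ℝ) (hreg : Regular x)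
    (hmono : StrictMonoOn x (Icc 0 1))
    (hrange : x 1 - x 0 > 2)
    (u v w : ℝ → ℝ)
    -- u(α) = 0 if x(α) ≤ x(0) + 1, and u(α) = x⁻¹(x(α) − 1) otherwise
    (hu_mem : ∀ α ∈ Icc (0:ℝ) 1, u α ∈ Icc (0:ℝ) 1)
    (hu_low : ∀ α ∈ Icc (0:ℝ) 1, x α ≤ x 0 + 1 → u α = 0)
    (hu_inv : ∀ α ∈ Icc (0:ℝ) 1, x 0 + 1 < x α → x (u α) = x α - 1)
    -- v(α) = 1 if x(α) ≥ x(1) − 1, and v(α) = x⁻¹(x(α) + 1) otherwise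
    (hv_mem : ∀ α ∈ Icc (0:ℝ) 1, v α ∈ Icc (0:ℝ) 1)
    (hv_high : ∀ α ∈ Icc (0:ℝ) 1, x 1 - 1 ≤ x α → v α = 1)
    (hv_inv : ∀ α ∈ Icc (0:ℝ) 1, x α < x 1 - 1 → x (v α) = x α + 1)
    (hw : w = v - u) :
    ∀ α ∈ Icc (0:ℝ) 1, DifferentiableAt ℝ u α → DifferentiableAt ℝ v α →
      DifferentiableAt ℝ (hkT x) α →
      deriv (hkT x) α = (1 / w α) *
        (deriv u α * (1 + hkT x α - x α) + deriv v α * (1 + x α - hkT x α)) := by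
  subst hw
  intro α hα hdu hdv hdT
  exact (uniqueDiffOn_Icc one_pos α hα).eq_deriv _ hdT.hasDerivAt.hasDerivWithinAt
    (hk_deriv_formula_general hreg.1 hmono ⟨hu_mem, hu_low, hu_inv⟩ ⟨hv_mem, hv_high, hv_inv⟩ hα
      hdu.hasDerivAt.hasDerivWithinAt hdv.hasDerivAt.hasDerivWithinAt)
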